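/- Let q > 2 be a prime power and K a finite field with q² elements, and let λ be a generator of K*. Let 𝒰 be a unital in PG(2,q²) that contains the points O = (0:0:1) and Y∞ = (0:1:0), whose tangent line at O is X₂ = 0 and whose tangent line at Y∞ is X₃ = 0, and which is preserved by the projectivity induced by the diagonal matrix diag(λ, λ^{q+1}, 1). Then there exists b ∈ K* such that 𝒰 = {(x₁:x₂:x₃) ∈ PG(2,q²) : x₁^{q+1} = b·x₂^q·x₃ + b^q·x₂·x₃^q}; in particular 𝒰 is a classical unital. -/

import Mathlib

open Projectivization
open scoped LinearAlgebra.Projectivization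

variable (K : Type*) [Field K]

/-- The point set of `PG(2,K)`. -/
abbrev PGPt := ℙ K (Fin 3 → K)

/-- A line of `PG(2,K)`: a 2-dimensional subspace of `K³`. -/
def PGLn := {W : Submodule K (Fin 3 → K) // Module.finrank K W = 2}

variable {K}

/-- Incidence between points and lines of `PG(2,K)`. -/
def PGMem (P : PGPt K) (L : PGLn K) : Prop := P.submodule ≤ L.1

/-- A unital in `PG(2,q²)`: a set of `q³+1` points meeting every line in `1` or `q+1` points. -/
def IsUnital (q : ℕ) (U : Set (PGPt K)) : Prop :=
  U.ncard = q ^ 3 + 1 ∧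
    ∀ L : PGLn K, {P ∈ U | PGMem P L}.ncard = 1 ∨ {P ∈ U | PGMem P L}.ncard = q + 1

lemma projmap_mul (f g : (Fin 3 → K) ≃ₗ[K] (Fin 3 → K)) (P : PGPt K) :
    Projectivization.map f.toLinearMap f.injective
      (Projectivization.map g.toLinearMap g.injective P) =
    Projectivization.map (f * g).toLinearMap (f * g).injective P := by
  induction' P using Projectivization.ind with v hv
  rfl

lemma projmap_one (P : PGPt K) :
    Projectivization.map (1 : (Fin 3 → K) ≃ₗ[K] (Fin 3 → K)).toLinearMap
      (1 : (Fin 3 → K) ≃ₗ[K] (Fin 3 → K)).injective P = P := by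
  induction' P using Projectivization.ind with v hv
  rfl

/-- The permutation of the projective plane induced by a linear automorphism of `K³`. -/
def projPerm (e : (Fin 3 → K) ≃ₗ[K] (Fin 3 → K)) : Equiv.Perm (PGPt K) where
  toFun := Projectivization.map e.toLinearMap e.injective
  invFun := Projectivization.map e.symm.toLinearMap e.symm.injective
  left_inv := fun P => by
    rw [projmap_mul, show e.symm * e = 1 from LinearEquiv.ext fun v => e.symm_apply_apply v, projmap_one]
  right_inv := fun P => by
    rw [projmap_mul, show e * e.symm = 1 from LinearEquiv.ext fun v => e.apply_symm_apply v, projmap_one]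

/-- The homomorphism from linear automorphisms of `K³` to permutations of `PG(2,K)`;
its range is the group `PGL(3,K)` of projectivities, acting faithfully on the plane. -/
def projHom : ((Fin 3 → K) ≃ₗ[K] (Fin 3 → K)) →* Equiv.Perm (PGPt K) where
  toFun := projPerm
  map_one' := by ext P; exact projmap_one P
  map_mul' := fun f g => by ext P; exact (projmap_mul f g P).symm

/-- `PGL(3,K)` as a group of permutations of the plane. -/
def PGL3 (K : Type*) [Field K] : Subgroup (Equiv.Perm (PGPt K)) := (projHom (K := K)).range

/-- The subgroup of `PGL(3,K)` preserving a point set `U`. -/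
def presGroup (U : Set (PGPt K)) : Subgroup (Equiv.Perm (PGPt K)) where
  carrier := {σ | σ ∈ PGL3 K ∧ σ '' U = U}
  one_mem' := ⟨one_mem _, by simp⟩
  mul_mem' := fun {a b} ha hb => ⟨mul_mem ha.1 hb.1, by
    rw [show ⇑(a * b) = ⇑a ∘ ⇑b from rfl, Set.image_comp, hb.2, ha.2]⟩
  inv_mem' := fun {a} ha => ⟨inv_mem ha.1, by
    conv_lhs => rw [← ha.2]
    rw [show (a⁻¹ : Equiv.Perm (PGPt K)) = a.symm from rfl]
    exact Equiv.symm_image_image a U⟩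

/-- The stabiliser of two points inside the group preserving `U`. -/
def twoPtStab (U : Set (PGPt K)) (P Q : PGPt K) : Subgroup (Equiv.Perm (PGPt K)) where
  carrier := {σ | σ ∈ presGroup U ∧ σ P = P ∧ σ Q = Q}
  one_mem' := ⟨one_mem _, rfl, rfl⟩
  mul_mem' := fun {a b} ha hb => ⟨mul_mem ha.1 hb.1, by
    simp [Equiv.Perm.mul_apply, hb.2.1, ha.2.1], by simp [Equiv.Perm.mul_apply, hb.2.2, ha.2.2]⟩
  inv_mem' := fun {a} ha => ⟨inv_mem ha.1,
    by rw [Equiv.Perm.inv_def, Equiv.symm_apply_eq]; exact ha.2.1.symm,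
    by rw [Equiv.Perm.inv_def, Equiv.symm_apply_eq]; exact ha.2.2.symm⟩

/-- The classical (Hermitian) unital: image of the Hermitian curve
`x^{q+1} + y^{q+1} + z^{q+1} = 0` under an element of `PGL(3,K)`. -/
def IsClassicalUnital (q : ℕ) (U : Set (PGPt K)) : Prop :=
  ∃ σ ∈ PGL3 K, σ '' {P : PGPt K |
    P.rep 0 ^ (q + 1) + P.rep 1 ^ (q + 1) + P.rep 2 ^ (q + 1) = 0} = U

/-- The diagonal linear automorphism `diag(λ, λ^{q+1}, 1)` of `K³`. -/
def diagEquiv {K : Type*} [Field K] (q : ℕ) (u : Kˣ) :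
    (Fin 3 → K) ≃ₗ[K] (Fin 3 → K) :=
  LinearEquiv.piCongrRight (fun i => LinearEquiv.smulOfUnit (![u, u ^ (q + 1), 1] i))

lemma diagEquiv_apply {K : Type*} [Field K] (q : ℕ) (u : Kˣ) (v : Fin 3 → K) (i : Fin 3) :
    diagEquiv q u v i = (![u, u ^ (q + 1), 1] i : Kˣ) * v i := rfl


lemma aux_choose_pred {K : Type*} [Field K] (q : ℕ) (hq1 : 1 ≤ q)
    (hc : ∀ m, 0 < m → m < q → ((q.choose m : ℕ) : K) = 0) (m : ℕ) (hm : m ≤ q - 1) :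
    (((q - 1).choose m : ℕ) : K) = (-1) ^ m := by
  induction m with
  | zero => simp
  | succ m ih =>
    have h := hc (m + 1) (by omega) (by omega)
    obtain ⟨r, rfl⟩ : ∃ r, q = r + 1 := ⟨q - 1, by omega⟩
    rw [Nat.choose_succ_succ] at h
    push_cast at h
    simp only [Nat.add_sub_cancel] at ih hm ⊢
    rw [ih (by omega)] at h
    rw [pow_succ]
    linear_combination h

lemma aux_choose {K : Type*} [Field K] (q : ℕ) (hq1 : 1 ≤ q)
    (hc : ∀ m, 0 < m → m < q → ((q.choose m : ℕ) : K) = 0) (s : ℕ) :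
    ∀ a b : ℕ, a + b = s → a + b ≤ q - 1 →
    (((q - 1 - a).choose b : ℕ) : K) = (-1) ^ b * ((a + b).choose b : ℕ) := by
  induction s with
  | zero =>
    intro a b h1 h2
    obtain rfl : a = 0 := by omega
    obtain rfl : b = 0 := by omega
    simp
  | succ s ih =>
    intro a
    induction a with
    | zero =>
      intro b _ h2
      simpa using aux_choose_pred q hq1 hc b (by omega)
    | succ a iha =>
      intro b h1 h2
      rcases b with _ | b
      · simp
      have e1 := ih a (b + 1) (by omega) (by omega)
      have e2 := ih (a + 1) b (by omega) (by omega)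
      have e3 : q - 1 - a = (q - 1 - (a + 1)) + 1 := by omega
      rw [e3, Nat.choose_succ_succ] at e1
      push_cast at e1
      rw [e2] at e1
      have e4 : a + 1 + (b + 1) = (a + 1 + b) + 1 := by omega
      rw [e4, Nat.choose_succ_succ]
      have e5 : a + (b + 1) = a + 1 + b := by omega
      rw [e5] at e1
      push_cast
      rw [pow_succ] at e1 ⊢
      linear_combination e1

lemma aux_sum_pow {K : Type*} [Field K] [Fintype K] (e : ℕ) (he : 0 < e) :
    ∑ x : K, x ^ e = if (Fintype.card K - 1) ∣ e then -1 else 0 := by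
  classical
  have h := FiniteField.sum_pow_units K e
  rw [← h]
  have h2 : ∑ x : K, x ^ e = ∑ x ∈ (Finset.univ.erase (0 : K)), x ^ e := by
    rw [← Finset.sum_erase_add _ _ (Finset.mem_univ (0 : K)), zero_pow (by omega), add_zero]
  rw [h2]
  symm
  refine Finset.sum_bij (fun x _ => (x : K)) ?_ ?_ ?_ ?_
  · intro a _; simp
  · intro a _ b _ hab; exact Units.ext hab
  · intro b hb
    exact ⟨Units.mk0 b (by simpa using hb), by simp, rfl⟩
  · intro a _; simp

lemma aux_exp (q a b n α β A B : ℕ) (hq : 2 ≤ q) (hn : a + b = n) (hn0 : 1 ≤ n) (hnq : n ≤ q - 1)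
    (hA : A = q - 1 - a) (hB : B = q - 1 - b) (hα : α ≤ A) (hβ : β ≤ B) :
    (q ^ 2 - 1) ∣ (q * (A + β) + (B + α)) ↔ (α = b ∧ β = a) := by
  obtain ⟨r, rfl⟩ : ∃ r, q = r + 1 := ⟨q - 1, by omega⟩
  have e1 : (r + 1) ^ 2 - 1 = (r + 1) * r + r := by
    have : (r + 1) ^ 2 = (r + 1) * r + r + 1 := by ring
    omega
  rw [e1]
  constructor
  · rintro ⟨w, hw⟩
    have hAβ : A + β ≤ 2 * r - 1 := by omega
    have hBα : B + α ≤ 2 * r - 1 := by omega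
    have h1 : (r + 1) * (A + β) ≤ (r + 1) * (2 * r - 1) := Nat.mul_le_mul_left _ hAβ
    have h2 : (r + 1) * (2 * r - 1) + (r + 1) = (r + 1) * (2 * r) := by
      rw [← Nat.mul_succ]; congr 1; omega
    have hw2 : w < 2 := by
      by_contra hcon
      have : ((r + 1) * r + r) * 2 ≤ ((r + 1) * r + r) * w := Nat.mul_le_mul_left _ (by omega)
      have h3 : (r + 1) * (2 * r) = (r + 1) * r * 2 := by ring
      omega
    have hw0 : w ≠ 0 := by
      rintro rfl
      have h4 : A + β ≤ (r + 1) * (A + β) := Nat.le_mul_of_pos_left _ (by omega)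
      omega
    obtain rfl : w = 1 := by omega
    rw [mul_one] at hw
    have hk : A + β = r := by
      rcases lt_trichotomy (A + β) r with h | h | h
      · exfalso
        have : (r + 1) * (A + β + 1) ≤ (r + 1) * r := Nat.mul_le_mul_left _ h
        rw [Nat.mul_succ] at this
        omega
      · exact h
      · exfalso
        have : (r + 1) * (r + 1) ≤ (r + 1) * (A + β) := Nat.mul_le_mul_left _ h
        rw [Nat.mul_succ] at this
        omega
    rw [hk] at hw
    omega
  · rintro ⟨rfl, rfl⟩
    have : A + β = r := by omega
    have h' : B + α = r := by omega
    rw [this, h']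

lemma aux_frob_sub {K : Type*} [Field K] (p h q : ℕ) [Fact p.Prime] [CharP K p] (hqp : q = p ^ h)
    (x y : K) : (x - y) ^ q = x ^ q - y ^ q := by
  subst hqp; exact sub_pow_char_pow x y ..

lemma aux_frob_add {K : Type*} [Field K] (p h q : ℕ) [Fact p.Prime] [CharP K p] (hqp : q = p ^ h)
    (x y : K) : (x + y) ^ q = x ^ q + y ^ q := by
  subst hqp; exact add_pow_char_pow x y ..

/-- The key exponential-sum evaluation. -/
lemma aux_key {K : Type*} [Field K] [Fintype K] (q : ℕ) (hq : 2 ≤ q)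
    (hK : Fintype.card K = q ^ 2) (hsub : ∀ x y : K, (x - y) ^ q = x ^ q - y ^ q)
    (a b n : ℕ) (hn : a + b = n) (hn0 : 1 ≤ n) (hnq : n ≤ q - 1) (z : K) :
    ∑ x : K, (z * x ^ (q + 1) - x) ^ (q * (q - 1 - a) + (q - 1 - b)) =
      - (((q - 1 - a).choose b : ℕ) * ((q - 1 - b).choose a : ℕ) * z ^ (q * b + a)) := by
  obtain ⟨A, hA⟩ : ∃ A, A = q - 1 - a := ⟨_, rfl⟩
  obtain ⟨B, hB⟩ : ∃ B, B = q - 1 - b := ⟨_, rfl⟩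
  rw [← hA, ← hB]
  have hx : ∀ x : K, x ^ (q ^ 2) = x := fun x => by rw [← hK]; exact FiniteField.pow_card x
  have step : ∀ x : K, (z * x ^ (q + 1) - x) ^ (q * A + B) =
      ∑ α ∈ Finset.range (A + 1), ∑ β ∈ Finset.range (B + 1),
        ((A.choose α : ℕ) * (B.choose β : ℕ) * z ^ (q * α + β) * (-1) ^ (A - α) * (-1) ^ (B - β)) *
          x ^ (q * (A + β) + (B + α)) := by
    intro x
    rw [pow_add, pow_mul, hsub, sub_eq_add_neg, sub_eq_add_neg, add_pow, add_pow, Finset.sum_mul_sum]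
    refine Finset.sum_congr rfl fun α hα => Finset.sum_congr rfl fun β hβ => ?_
    have hα' : α ≤ A := by simpa [Nat.lt_succ_iff] using hα
    have hβ' : β ≤ B := by simpa [Nat.lt_succ_iff] using hβ
    obtain ⟨s, rfl⟩ := Nat.exists_eq_add_of_le hα'
    obtain ⟨t, rfl⟩ := Nat.exists_eq_add_of_le hβ'
    have h1 : (z * x ^ (q + 1)) ^ q = z ^ q * x ^ (q + 1) := by
      rw [mul_pow, ← pow_mul]
      congr 1
      have : (q + 1) * q = q ^ 2 + q := by ring
      rw [this, pow_add, hx, pow_succ, mul_comm]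
    rw [h1, Nat.add_sub_cancel_left, Nat.add_sub_cancel_left, neg_pow (x ^ q), neg_pow x]
    ring
  simp_rw [step]
  rw [Finset.sum_comm]
  have step2 : ∀ α ∈ Finset.range (A + 1), (∑ x : K, ∑ β ∈ Finset.range (B + 1),
        ((A.choose α : ℕ) * (B.choose β : ℕ) * z ^ (q * α + β) * (-1) ^ (A - α) * (-1) ^ (B - β)) *
          x ^ (q * (A + β) + (B + α))) = if α = b then
        - (((A.choose b : ℕ) : K) * (B.choose a : ℕ) * z ^ (q * b + a)) else 0 := by
    intro α hα
    have hα' : α ≤ A := by simpa [Nat.lt_succ_iff] using hα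
    rw [Finset.sum_comm]
    have step3 : ∀ β ∈ Finset.range (B + 1), (∑ x : K,
        ((A.choose α : ℕ) * (B.choose β : ℕ) * z ^ (q * α + β) * (-1) ^ (A - α) * (-1) ^ (B - β)) *
          x ^ (q * (A + β) + (B + α))) = if β = a then (if α = b then
        - (((A.choose b : ℕ) : K) * (B.choose a : ℕ) * z ^ (q * b + a)) else 0) else 0 := by
      intro β hβ
      have hβ' : β ≤ B := by simpa [Nat.lt_succ_iff] using hβ
      rw [← Finset.mul_sum, aux_sum_pow, hK]
      · have := aux_exp q a b n α β A B hq hn hn0 hnq hA hB hα' hβ'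
        by_cases hc : α = b ∧ β = a
        · rw [if_pos (this.2 hc), if_pos hc.2, if_pos hc.1]
          obtain ⟨rfl, rfl⟩ := hc
          have e : A - α = B - β := by omega
          rw [e]
          have e2 : ((-1 : K)) ^ (B - β) * (-1) ^ (B - β) = 1 := by
            rw [← mul_pow]; simp
          linear_combination (-((A.choose α : ℕ) * (B.choose β : ℕ) * z ^ (q * α + β) : K)) * e2
        · rw [if_neg (fun h => hc (this.1 h)), mul_zero]
          split_ifs <;> tauto
      · have : A + β ≤ q * (A + β) := Nat.le_mul_of_pos_left _ (by omega)
        omega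
    rw [Finset.sum_congr rfl step3, Finset.sum_ite_eq' , if_pos]
    simp; omega
  rw [Finset.sum_congr rfl step2, Finset.sum_ite_eq', if_pos]
  simp; omega

/-- The fixed points of the `q`-power map form an explicit set of size `q`. -/
lemma aux_fix {K : Type*} [Field K] [Fintype K] [DecidableEq K] (q : ℕ) (hq : 2 ≤ q)
    (hK : Fintype.card K = q ^ 2) (u : Kˣ) (hu : ∀ x : Kˣ, x ∈ Subgroup.zpowers u) :
    orderOf (u ^ (q + 1)) = q - 1 ∧
    (Finset.univ.filter fun k : K => k ^ q = k) =
      insert 0 ((Finset.range (q - 1)).image fun l => ((u ^ (q + 1) : Kˣ) : K) ^ l) ∧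
    (∀ i ∈ Finset.range (q - 1), ∀ j ∈ Finset.range (q - 1),
      ((u ^ (q + 1) : Kˣ) : K) ^ i = ((u ^ (q + 1) : Kˣ) : K) ^ j → i = j) := by
  have hord : orderOf u = q ^ 2 - 1 := by
    rw [orderOf_eq_card_of_forall_mem_zpowers hu, Nat.card_eq_fintype_card, Fintype.card_units, hK]
  have hfac : q ^ 2 - 1 = (q + 1) * (q - 1) := by
    have := Nat.sq_sub_sq q 1
    simpa using this
  have hg : orderOf (u ^ (q + 1)) = q - 1 := by
    rw [orderOf_pow, hord, hfac, Nat.gcd_mul_right_left, Nat.mul_div_cancel_left _ (by omega)]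
  have hinj : ∀ i ∈ Finset.range (q - 1), ∀ j ∈ Finset.range (q - 1),
      ((u ^ (q + 1) : Kˣ) : K) ^ i = ((u ^ (q + 1) : Kˣ) : K) ^ j → i = j := by
    intro i hi j hj hij
    rw [← Units.val_pow_eq_pow_val, ← Units.val_pow_eq_pow_val] at hij
    have := Units.ext hij
    refine pow_injOn_Iio_orderOf ?_ ?_ this
    · rw [hg]; simpa using hi
    · rw [hg]; simpa using hj
  refine ⟨hg, ?_, hinj⟩
  symm
  apply Finset.eq_of_subset_of_card_le
  · intro k hk
    rw [Finset.mem_insert, Finset.mem_image] at hk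
    rw [Finset.mem_filter]
    refine ⟨Finset.mem_univ _, ?_⟩
    rcases hk with rfl | ⟨l, _, rfl⟩
    · exact zero_pow (by omega)
    · rw [← Units.val_pow_eq_pow_val, ← Units.val_pow_eq_pow_val]
      congr 1
      have h1 : (u ^ (q + 1)) ^ (q - 1) = 1 := by rw [← hg]; exact pow_orderOf_eq_one _
      have h2 : (u ^ (q + 1)) ^ q = u ^ (q + 1) := by
        conv_lhs => rw [show q = (q - 1) + 1 by omega]
        rw [pow_succ, show q - 1 + 1 = q by omega, h1, one_mul]
      rw [← pow_mul, mul_comm, pow_mul, h2]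
  · have h1 : (insert (0 : K) ((Finset.range (q - 1)).image
        fun l => ((u ^ (q + 1) : Kˣ) : K) ^ l)).card = q := by
      rw [Finset.card_insert_of_notMem, Finset.card_image_of_injOn, Finset.card_range]
      · omega
      · intro i hi j hj hij; exact hinj i hi j hj hij
      · rw [Finset.mem_image]
        rintro ⟨l, _, hl⟩
        exact (pow_ne_zero l (Units.ne_zero _)) hl
    rw [h1]
    have hne := FiniteField.X_pow_card_sub_X_ne_zero K (p := q) (by omega)
    have hdeg := FiniteField.X_pow_card_sub_X_natDegree_eq K (p := q) (by omega)
    calc _ ≤ (Polynomial.X ^ q - Polynomial.X : Polynomial K).roots.toFinset.card := by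
          apply Finset.card_le_card
          intro k hk
          rw [Finset.mem_filter] at hk
          rw [Multiset.mem_toFinset, Polynomial.mem_roots hne]
          simp [Polynomial.IsRoot, hk.2]
      _ ≤ _ := Multiset.toFinset_card_le _
      _ ≤ _ := Polynomial.card_roots' _
      _ = q := hdeg

lemma aux_fix_card {K : Type*} [Field K] [Fintype K] [DecidableEq K] (q : ℕ) (hq : 2 ≤ q)
    (hK : Fintype.card K = q ^ 2) (u : Kˣ) (hu : ∀ x : Kˣ, x ∈ Subgroup.zpowers u) :
    (Finset.univ.filter fun k : K => k ^ q = k).card = q := by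
  obtain ⟨hg, hF, hinj⟩ := aux_fix q hq hK u hu
  rw [hF, Finset.card_insert_of_notMem, Finset.card_image_of_injOn, Finset.card_range]
  · omega
  · intro i hi j hj hij; exact hinj i hi j hj hij
  · rw [Finset.mem_image]
    rintro ⟨l, _, hl⟩
    exact (pow_ne_zero l (Units.ne_zero _)) hl

lemma aux_fix_sum {K : Type*} [Field K] [Fintype K] [DecidableEq K] (q : ℕ) (hq : 2 ≤ q)
    (hK : Fintype.card K = q ^ 2) (u : Kˣ) (hu : ∀ x : Kˣ, x ∈ Subgroup.zpowers u)
    (hq0 : (q : K) = 0) (e : ℕ) (he : 0 < e) :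
    ∑ k ∈ (Finset.univ.filter fun k : K => k ^ q = k), k ^ e =
      if (q - 1) ∣ e then -1 else 0 := by
  obtain ⟨hg, hF, hinj⟩ := aux_fix q hq hK u hu
  rw [hF, Finset.sum_insert, Finset.sum_image (fun i hi j hj hij => hinj i hi j hj hij),
    zero_pow (by omega), zero_add]
  swap
  · rw [Finset.mem_image]
    rintro ⟨l, _, hl⟩
    exact (pow_ne_zero l (Units.ne_zero _)) hl
  have hsw : ∀ l, (((u ^ (q + 1) : Kˣ) : K) ^ l) ^ e = (((u ^ (q + 1) : Kˣ) : K) ^ e) ^ l := by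
    intro l; rw [← pow_mul, ← pow_mul, mul_comm]
  simp_rw [hsw]
  have hiff : ((u ^ (q + 1) : Kˣ) : K) ^ e = 1 ↔ (q - 1) ∣ e := by
    rw [← hg, orderOf_dvd_iff_pow_eq_one, ← Units.val_pow_eq_pow_val, Units.val_eq_one]
  split_ifs with hd
  · rw [hiff.2 hd]
    simp only [one_pow, Finset.sum_const, Finset.card_range, nsmul_eq_mul, mul_one]
    rw [Nat.cast_sub (by omega), hq0]; simp
  · rw [geom_sum_eq (fun h => hd (hiff.1 h)), ← hsw]
    have h1 : (u ^ (q + 1)) ^ (q - 1) = 1 := by rw [← hg]; exact pow_orderOf_eq_one _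
    rw [← Units.val_pow_eq_pow_val _ (q - 1), h1]
    simp

/-- Power sums of the slope set. -/
lemma aux_power_sums {K : Type*} [Field K] [Fintype K] [DecidableEq K] (q : ℕ) (hq : 2 ≤ q)
    (hK : Fintype.card K = q ^ 2) (u : Kˣ) (hu : ∀ x : Kˣ, x ∈ Subgroup.zpowers u)
    (hq0 : (q : K) = 0) (hsub : ∀ x y : K, (x - y) ^ q = x ^ q - y ^ q)
    (A : Finset K)
    (hA : ∀ k : K, k ≠ 0 → (if k ^ q = k then (1 : K) else 0) +
      ((Finset.univ.filter fun x : K => x ≠ 0 ∧ (x + k) / x ^ (q + 1) ∈ A).card : K) = 1)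
    (a b n : ℕ) (hn : a + b = n) (hn0 : 1 ≤ n) (hnq : n ≤ q - 1) :
    (((q - 1 - a).choose b : ℕ) : K) * ((q - 1 - b).choose a : ℕ) * ∑ z ∈ A, z ^ (q * b + a) =
      if n = q - 1 then -1 else 0 := by
  obtain ⟨e, he⟩ : ∃ e, e = q * (q - 1 - a) + (q - 1 - b) := ⟨_, rfl⟩
  have hfac : q ^ 2 - 1 = q * (q - 1) + (q - 1) := by
    have := Nat.sq_sub_sq q 1
    simp only [one_pow] at this
    rw [this]; ring
  have h1 : q * (q - 1 - a) + q * a = q * (q - 1) := by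
    rw [← Nat.mul_add]; congr 1; omega
  have hqa : a ≤ q * a := Nat.le_mul_of_pos_left _ (by omega)
  have hqA : (q - 1 - a) ≤ q * (q - 1 - a) := Nat.le_mul_of_pos_left _ (by omega)
  have he0 : 0 < e := by omega
  have helt : e < q ^ 2 - 1 := by omega
  have hdvd : (q - 1) ∣ e ↔ n = q - 1 := by
    obtain ⟨r, rfl⟩ : ∃ r, q = r + 1 := ⟨q - 1, by omega⟩
    simp only [Nat.add_sub_cancel] at *
    have e2 : e = r * (r - a) + ((r - a) + (r - b)) := by rw [he]; ring
    rw [e2, Nat.dvd_add_right (Dvd.intro _ rfl)]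
    constructor
    · rintro ⟨w, hw⟩
      have hw2 : w < 2 := by
        by_contra hc
        have : r * 2 ≤ r * w := Nat.mul_le_mul_left _ (by omega)
        omega
      interval_cases w <;> omega
    · intro hh
      have : r - a + (r - b) = r := by omega
      rw [this]
  -- evaluate the double sum in two ways
  have hS1 : ∑ k : K, k ^ e *
      ((Finset.univ.filter fun x : K => x ≠ 0 ∧ (x + k) / x ^ (q + 1) ∈ A).card : K) =
      if n = q - 1 then 1 else 0 := by
    have : ∀ k : K, k ^ e *
      ((Finset.univ.filter fun x : K => x ≠ 0 ∧ (x + k) / x ^ (q + 1) ∈ A).card : K) =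
      k ^ e - if k ^ q = k then k ^ e else 0 := by
      intro k
      by_cases hk : k = 0
      · subst hk; simp [zero_pow he0.ne']
      · have := hA k hk
        split_ifs at this ⊢ <;> linear_combination k ^ e * this
    simp_rw [this]
    rw [Finset.sum_sub_distrib, ← Finset.sum_filter, aux_fix_sum q hq hK u hu hq0 e he0,
      FiniteField.sum_pow_lt_card_sub_one K e (by rw [hK]; exact helt)]
    simp only [hdvd]
    split_ifs <;> simp
  have hS2 : ∑ k : K, k ^ e *
      ((Finset.univ.filter fun x : K => x ≠ 0 ∧ (x + k) / x ^ (q + 1) ∈ A).card : K) =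
      ∑ z ∈ A, ∑ x : K, (z * x ^ (q + 1) - x) ^ e := by
    have hcard : ∀ k : K,
        ((Finset.univ.filter fun x : K => x ≠ 0 ∧ (x + k) / x ^ (q + 1) ∈ A).card : K) =
        ∑ x : K, ∑ z ∈ A, if x ≠ 0 ∧ k = z * x ^ (q + 1) - x then (1 : K) else 0 := by
      intro k
      rw [Finset.card_filter, Nat.cast_sum]
      refine Finset.sum_congr rfl fun x _ => ?_
      by_cases hx : x = 0
      · simp [hx]
      · have hx' : x ^ (q + 1) ≠ 0 := pow_ne_zero _ hx
        have : ∀ z, (x ≠ 0 ∧ k = z * x ^ (q + 1) - x) ↔ (x + k) / x ^ (q + 1) = z := by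
          intro z
          rw [div_eq_iff hx']
          constructor
          · rintro ⟨_, h⟩; rw [h]; ring
          · intro h; exact ⟨hx, by rw [← h]; ring⟩
        simp_rw [this]
        rw [Finset.sum_ite_eq]
        simp [hx]
    simp_rw [hcard, Finset.mul_sum]
    rw [Finset.sum_comm]
    rw [Finset.sum_comm (s := A)]
    refine Finset.sum_congr rfl fun x _ => ?_
    rw [Finset.sum_comm]
    refine Finset.sum_congr rfl fun z _ => ?_
    by_cases hx : x = 0
    · simp [hx, zero_pow he0.ne']
    · simp [hx]
  rw [hS1] at hS2
  simp_rw [he, aux_key q hq hK hsub a b n hn hn0 hnq] at hS2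
  rw [Finset.sum_neg_distrib, ← Finset.mul_sum] at hS2
  split_ifs at hS2 ⊢ <;> linear_combination hS2

/-- The algebraic core. -/
lemma aux_core {K : Type*} [Field K] [Fintype K] [DecidableEq K] (q : ℕ) (hq : 2 ≤ q)
    (hK : Fintype.card K = q ^ 2) (u : Kˣ) (hu : ∀ x : Kˣ, x ∈ Subgroup.zpowers u)
    (hq0 : (q : K) = 0) (hsub : ∀ x y : K, (x - y) ^ q = x ^ q - y ^ q)
    (hadd : ∀ x y : K, (x + y) ^ q = x ^ q + y ^ q)
    (hch : ∀ m, 0 < m → m < q → ((q.choose m : ℕ) : K) = 0)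
    (A : Finset K) (hA0 : (A.card : K) = 0) (hAq : A.card ≤ q)
    (hA : ∀ k : K, k ≠ 0 → (if k ^ q = k then (1 : K) else 0) +
      ((Finset.univ.filter fun x : K => x ≠ 0 ∧ (x + k) / x ^ (q + 1) ∈ A).card : K) = 1) :
    A.card = q ∧ ∀ a ∈ A, ∀ a' ∈ A, (a - a') ^ q = a - a' := by
  have hqq : ∀ x : K, (x ^ q) ^ q = x := fun x => by
    rw [← pow_mul, ← pow_two, ← hK]; exact FiniteField.pow_card x
  have hps := aux_power_sums q hq hK u hu hq0 hsub A hA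
  -- binomially weighted power sums
  have hs : ∀ a b n : ℕ, a + b = n → 1 ≤ n → n ≤ q - 1 →
      ((n.choose a : ℕ) : K) * ∑ z ∈ A, z ^ (q * b + a) =
        if n = q - 1 then -((n.choose a : ℕ) : K) else 0 := by
    intro a b n hn hn0 hnq
    have h := hps a b n hn hn0 hnq
    by_cases hc : n = q - 1
    · rw [if_pos hc] at h ⊢
      have e1 : q - 1 - a = b := by omega
      have e2 : q - 1 - b = a := by omega
      rw [e1, e2] at h
      simp only [Nat.choose_self, Nat.cast_one, one_mul] at h
      rw [h]; ring
    · rw [if_neg hc] at h ⊢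
      rw [aux_choose q (by omega) hch n a b hn (by omega),
        aux_choose q (by omega) hch n b a (by omega) (by omega)] at h
      have e1 : (a + b).choose b = n.choose a := by
        rw [← hn]; exact Nat.choose_symm_add.symm
      have e2 : (b + a).choose a = n.choose a := by rw [← hn, add_comm]
      rw [e1, e2] at h
      rcases mul_eq_zero.1 h with h | h
      · rcases mul_eq_zero.1 h with h | h
        · rcases mul_eq_zero.1 h with h | h
          · exact absurd h (pow_ne_zero _ (by simp))
          · rw [h, zero_mul]
        · rcases mul_eq_zero.1 h with h | h
          · exact absurd h (pow_ne_zero _ (by simp))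
          · rw [h, zero_mul]
      · rw [h, mul_zero]
  have htr : ∀ x : K, ∀ n : ℕ, 1 ≤ n → n ≤ q - 1 →
      ∑ z ∈ A, (x * z + (x * z) ^ q) ^ n = if n = q - 1 then -(x + x ^ q) ^ n else 0 := by
    intro x n hn0 hnq
    simp_rw [add_pow]
    rw [Finset.sum_comm]
    have : ∀ a ∈ Finset.range (n + 1), (∑ z ∈ A, (x * z) ^ a * ((x * z) ^ q) ^ (n - a) *
        ((n.choose a : ℕ) : K)) = if n = q - 1 then -(x ^ a * (x ^ q) ^ (n - a) *
          ((n.choose a : ℕ) : K)) else 0 := by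
      intro a ha
      have ha' : a ≤ n := by simpa [Nat.lt_succ_iff] using ha
      have h := hs a (n - a) n (by omega) hn0 hnq
      have e : ∀ z : K, (x * z) ^ a * ((x * z) ^ q) ^ (n - a) * ((n.choose a : ℕ) : K) =
          (x ^ a * (x ^ q) ^ (n - a)) * (((n.choose a : ℕ) : K) * z ^ (q * (n - a) + a)) := by
        intro z; rw [mul_pow, mul_pow, mul_pow, pow_add z, pow_mul z]; ring
      simp_rw [e]
      rw [← Finset.mul_sum, ← Finset.mul_sum, h]
      split_ifs <;> ring
    rw [Finset.sum_congr rfl this]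
    split_ifs with hc
    · rw [Finset.sum_neg_distrib]
    · simp
  have hFone : ∀ t : K, t ^ q = t → t ≠ 0 → t ^ (q - 1) = 1 := by
    intro t ht ht0
    have : t ^ (q - 1) * t = 1 * t := by
      rw [← pow_succ, show q - 1 + 1 = q by omega, ht, one_mul]
    exact mul_right_cancel₀ ht0 this
  have htrF : ∀ y : K, (y + y ^ q) ^ q = y + y ^ q := by
    intro y; rw [hadd, hqq, add_comm]
  -- each trace function with nonzero trace hits every value
  have hhit : ∀ x : K, x + x ^ q ≠ 0 → ∀ v : K, v ^ q = v →
      ∃ z ∈ A, x * z + (x * z) ^ q = v := by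
    intro x hx v hv
    by_contra hcon
    push Not at hcon
    have h0 : ∑ z ∈ A, ((x * z + (x * z) ^ q) - v) ^ (q - 1) = 0 := by
      rw [← hA0, Finset.cast_card]
      refine Finset.sum_congr rfl fun z hz => ?_
      refine hFone _ ?_ (sub_ne_zero.2 (hcon z hz))
      rw [hsub, htrF, hv]
    have h1 : ∑ z ∈ A, ((x * z + (x * z) ^ q) - v) ^ (q - 1) = -1 := by
      have hexp : ∀ z ∈ A, ((x * z + (x * z) ^ q) - v) ^ (q - 1) = ∑ j ∈ Finset.range (q - 1 + 1),
          (x * z + (x * z) ^ q) ^ j * (-v) ^ (q - 1 - j) * (((q - 1).choose j : ℕ) : K) := by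
        intro z _
        rw [sub_eq_add_neg, add_pow (x * z + (x * z) ^ q)]
      rw [Finset.sum_congr rfl hexp, Finset.sum_comm, Finset.sum_range_succ]
      have hz : ∀ j ∈ Finset.range (q - 1), (∑ z ∈ A, (x * z + (x * z) ^ q) ^ j *
          (-v) ^ (q - 1 - j) * (((q - 1).choose j : ℕ) : K)) = 0 := by
        intro j hj
        have hj' : j < q - 1 := by simpa using hj
        rw [← Finset.sum_mul, ← Finset.sum_mul]
        rcases Nat.eq_zero_or_pos j with rfl | hjp
        · simp [hA0]
        · rw [htr x j hjp hj'.le, if_neg hj'.ne]; simp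
      rw [Finset.sum_eq_zero hz]
      simp only [Nat.sub_self, pow_zero, mul_one, Nat.choose_self, Nat.cast_one, zero_add]
      rw [htr x (q - 1) (by omega) le_rfl, if_pos rfl, hFone _ (htrF x) hx]
    rw [h0] at h1
    have : (1 : K) = 0 := by linear_combination h1
    exact one_ne_zero this
  have himg : ∀ x : K, x + x ^ q ≠ 0 →
      q ≤ (A.image fun z => x * z + (x * z) ^ q).card := by
    intro x hx
    refine (aux_fix_card q hq hK u hu).symm.le.trans ?_
    apply Finset.card_le_card
    intro v hv
    rw [Finset.mem_filter] at hv
    obtain ⟨z, hz, rfl⟩ := hhit x hx v hv.2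
    exact Finset.mem_image_of_mem _ hz
  have hinj : ∀ x : K, x + x ^ q ≠ 0 →
      Set.InjOn (fun z => x * z + (x * z) ^ q) (A : Set K) := by
    intro x hx
    apply Finset.injOn_of_card_image_eq
    exact le_antisymm Finset.card_image_le (hAq.trans (himg x hx))
  -- a nonzero element of trace zero
  obtain ⟨y, hy0, hy⟩ : ∃ y : K, y ≠ 0 ∧ y ^ q = -y := by
    have : ∃ z : K, z ^ q ≠ z := by
      by_contra hc
      push Not at hc
      have h1 := aux_fix_card q hq hK u hu
      rw [Finset.filter_true_of_mem (fun x _ => hc x), Finset.card_univ, hK] at h1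
      nlinarith
    obtain ⟨z, hz⟩ := this
    exact ⟨z ^ q - z, sub_ne_zero.2 hz, by rw [hsub, hqq]; ring⟩
  have hdiff : ∀ a ∈ A, ∀ a' ∈ A, (a - a') ^ q = a - a' := by
    intro a ha a' ha'
    by_cases hd : a - a' = 0
    · rw [hd, zero_pow (by omega)]
    have hdq : (a - a') ^ q ≠ 0 := pow_ne_zero _ hd
    by_contra hne
    have hx : (y / (a - a')) + (y / (a - a')) ^ q ≠ 0 := by
      rw [div_pow, hy]
      intro h
      apply hne
      field_simp at h
      have h2 : y * ((a - a') ^ q - (a - a')) = 0 := by linear_combination h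
      rcases mul_eq_zero.1 h2 with h2 | h2
      · exact absurd h2 hy0
      · exact sub_eq_zero.1 h2
    have h := hinj _ hx ha ha'
    apply hd
    rw [sub_eq_zero]
    apply h
    have e : (y / (a - a')) * a = (y / (a - a')) * a' + y := by
      field_simp; ring
    simp only
    rw [e, hadd, hy]; ring
  refine ⟨?_, hdiff⟩
  have hx : ∃ x : K, x + x ^ q ≠ 0 := by
    by_contra hc
    push Not at hc
    have h1 := hc 1
    have h2 := hc u
    have : ∀ x : K, x ^ q = x := by
      intro x
      have := hc x
      rw [one_pow] at h1
      linear_combination this - x * h1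
    have h1 := aux_fix_card q hq hK u hu
    rw [Finset.filter_true_of_mem (fun x _ => this x), Finset.card_univ, hK] at h1
    nlinarith
  obtain ⟨x, hx⟩ := hx
  exact le_antisymm hAq ((himg x hx).trans Finset.card_image_le)

/-- The affine version of the theorem. -/
lemma aux_affine {K : Type*} [Field K] [Fintype K] [DecidableEq K] (q : ℕ) (hq : 2 ≤ q)
    (hK : Fintype.card K = q ^ 2) (u : Kˣ) (hu : ∀ x : Kˣ, x ∈ Subgroup.zpowers u)
    (hq0 : (q : K) = 0) (hsub : ∀ x y : K, (x - y) ^ q = x ^ q - y ^ q)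
    (hadd : ∀ x y : K, (x + y) ^ q = x ^ q + y ^ q)
    (hch : ∀ m, 0 < m → m < q → ((q.choose m : ℕ) : K) = 0)
    (T : K → K → Prop)
    (hT : ∀ μ : K, μ ≠ 0 → ∀ x y, T x y → T (μ * x) (μ ^ (q + 1) * y))
    (h00 : T 0 0) (hx0 : ∀ x, T x 0 → x = 0)
    (hline : ∀ m k : K, {x | T x (m * x + k)}.ncard = 1 ∨ {x | T x (m * x + k)}.ncard = q + 1)
    (hvert : ∀ x : K, {y | T x y}.ncard = 0 ∨ {y | T x y}.ncard = q) :
    ∃ b : K, b ≠ 0 ∧ ∀ x y, T x y ↔ x ^ (q + 1) = b * y ^ q + b ^ q * y := by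
  classical
  have hqq : ∀ x : K, (x ^ q) ^ q = x := fun x => by
    rw [← pow_mul, ← pow_two, ← hK]; exact FiniteField.pow_card x
  have hT' : ∀ μ : K, μ ≠ 0 → ∀ x y, T x y ↔ T (μ * x) (μ ^ (q + 1) * y) := by
    intro μ hμ x y
    refine ⟨hT μ hμ x y, fun h => ?_⟩
    have h2 := hT μ⁻¹ (inv_ne_zero hμ) _ _ h
    rw [← mul_assoc, ← mul_assoc, ← mul_pow, inv_mul_cancel₀ hμ] at h2
    simpa using h2
  -- points on the line X₁ = 0
  have hD : (Finset.univ.filter fun y => T 0 y).card = q := by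
    have h := hvert 0
    rw [Set.ncard_eq_toFinset_card'] at h
    have e : {y | T 0 y}.toFinset = Finset.univ.filter fun y => T 0 y := by ext; simp
    rw [e] at h
    rcases h with h | h
    · exfalso
      rw [Finset.card_eq_zero] at h
      have : (0 : K) ∈ Finset.univ.filter fun y => T 0 y := by simp [h00]
      rw [h] at this
      simp at this
    · exact h
  obtain ⟨c, hcD, hc0⟩ : ∃ c, c ∈ (Finset.univ.filter fun y => T 0 y) ∧ c ≠ 0 :=
    Finset.exists_mem_ne (by omega) 0
  have hTc : T 0 c := by simpa using hcD
  obtain ⟨hg, hF, hFinj⟩ := aux_fix q hq hK u hu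
  have hDF : (Finset.univ.filter fun k : K => k ^ q = k).image (fun k => c * k) =
      Finset.univ.filter fun y => T 0 y := by
    apply Finset.eq_of_subset_of_card_le
    · intro y hy
      rw [hF] at hy
      simp only [Finset.mem_image, Finset.mem_insert, Finset.mem_range] at hy
      obtain ⟨k, hk, rfl⟩ := hy
      simp only [Finset.mem_filter, Finset.mem_univ, true_and]
      rcases hk with rfl | ⟨l, _, rfl⟩
      · simpa using h00
      · have h := hT ((u : K) ^ l) (pow_ne_zero _ u.ne_zero) 0 c hTc
        rw [mul_zero] at h
        convert h using 1
        push_cast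
        ring
    · rw [hD, Finset.card_image_of_injective _ (mul_right_injective₀ hc0),
        aux_fix_card q hq hK u hu]
  have hT0 : ∀ k, T 0 (c * k) ↔ k ^ q = k := by
    intro k
    have h := Finset.ext_iff.1 hDF (c * k)
    simp only [Finset.mem_image, Finset.mem_filter, Finset.mem_univ, true_and] at h
    rw [← h]
    constructor
    · rintro ⟨k', hk', he⟩
      rwa [← mul_left_cancel₀ hc0 he]
    · intro hk; exact ⟨k, hk, rfl⟩
  -- the slope set
  obtain ⟨A, hAdef⟩ : ∃ A : Finset K, A = Finset.univ.filter fun a => T 1 (c * a) := ⟨_, rfl⟩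
  have hAmem : ∀ a, a ∈ A ↔ T 1 (c * a) := by intro a; rw [hAdef]; simp
  have hAcard : A.card = 0 ∨ A.card = q := by
    have h := hvert 1
    have e : A.card = {y | T 1 y}.ncard := by
      rw [Set.ncard_eq_toFinset_card']
      refine Finset.card_bij (fun a _ => c * a) ?_ ?_ ?_
      · intro a ha; simpa using (hAmem a).1 ha
      · intro a _ a' _ h; exact mul_left_cancel₀ hc0 h
      · intro y hy
        have hy' : T 1 y := by simpa using hy
        have e : c * (y / c) = y := by field_simp
        exact ⟨y / c, by rw [hAmem, e]; exact hy', e⟩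
    rw [e]; exact h
  have hTx : ∀ x y, x ≠ 0 → (T x (c * y) ↔ y / x ^ (q + 1) ∈ A) := by
    intro x y hx
    rw [hAmem, hT' x hx 1]
    have : x ^ (q + 1) ≠ 0 := pow_ne_zero _ hx
    have e : x ^ (q + 1) * (c * (y / x ^ (q + 1))) = c * y := by field_simp
    rw [e, mul_one]
  have hA : ∀ k : K, k ≠ 0 → (if k ^ q = k then (1 : K) else 0) +
      ((Finset.univ.filter fun x : K => x ≠ 0 ∧ (x + k) / x ^ (q + 1) ∈ A).card : K) = 1 := by
    intro k hk
    have h := hline c (c * k)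
    have hone : (({x | T x (c * x + c * k)}.ncard : ℕ) : K) = 1 := by
      rcases h with h | h <;> rw [h] <;> simp [hq0]
    refine Eq.trans ?_ hone
    rw [Set.ncard_eq_toFinset_card']
    have e : {x | T x (c * x + c * k)}.toFinset =
        (if k ^ q = k then {0} else ∅) ∪
          (Finset.univ.filter fun x : K => x ≠ 0 ∧ (x + k) / x ^ (q + 1) ∈ A) := by
      ext x
      rw [Finset.mem_union, Finset.mem_filter, Set.mem_toFinset, Set.mem_ofPred_eq, ← mul_add]
      by_cases hx : x = 0
      · subst hx
        rw [zero_add, hT0]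
        split_ifs with h <;> simp [h]
      · rw [hTx x _ hx]
        split_ifs with h <;> simp [hx]
    rw [e, Finset.card_union_of_disjoint]
    · push_cast
      congr 1
      split_ifs <;> simp
    · split_ifs <;> simp
  have hA0 : (A.card : K) = 0 := by rcases hAcard with h | h <;> rw [h] <;> simp [hq0]
  obtain ⟨hAc, hAd⟩ := aux_core q hq hK u hu hq0 hsub hadd hch A hA0
    (by rcases hAcard with h | h <;> omega) hA
  obtain ⟨a₀, ha₀⟩ : A.Nonempty := by
    rw [← Finset.card_pos]; omega
  obtain ⟨δ, hδ⟩ : ∃ δ, δ = a₀ ^ q - a₀ := ⟨_, rfl⟩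
  have hAeq : A = (Finset.univ.filter fun k : K => k ^ q = k).image (fun k => a₀ + k) := by
    apply Finset.eq_of_subset_of_card_le
    · intro a ha
      rw [Finset.mem_image]
      refine ⟨a - a₀, ?_, by ring⟩
      rw [Finset.mem_filter]
      exact ⟨Finset.mem_univ _, hAd a ha a₀ ha₀⟩
    · rw [hAc, Finset.card_image_of_injective _ (add_right_injective a₀),
        aux_fix_card q hq hK u hu]
  have hAiff : ∀ a, a ∈ A ↔ a ^ q - a = δ := by
    intro a
    rw [hAeq, Finset.mem_image, hδ]
    constructor
    · rintro ⟨k, hk, rfl⟩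
      rw [Finset.mem_filter] at hk
      rw [hadd, hk.2]; ring
    · intro h
      refine ⟨a - a₀, ?_, by ring⟩
      rw [Finset.mem_filter]
      refine ⟨Finset.mem_univ _, ?_⟩
      rw [hsub]
      linear_combination h
  have hδ0 : δ ≠ 0 := by
    intro h
    have : (0 : K) ∈ A := by rw [hAiff, h, zero_pow (by omega)]; ring
    rw [hAmem, mul_zero] at this
    exact one_ne_zero (hx0 1 this)
  have hδq : δ ^ q = -δ := by rw [hδ, hsub, hqq]; ring
  have hcq : c ^ q ≠ 0 := pow_ne_zero _ hc0
  have hbq : (1 / (c ^ q * δ)) ^ q = -(1 / (c * δ)) := by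
    rw [div_pow, one_pow, mul_pow, hqq, hδq]
    field_simp
  refine ⟨1 / (c ^ q * δ), one_div_ne_zero (mul_ne_zero hcq hδ0), ?_⟩
  intro x y
  rw [hbq]
  have ey : y = c * (y / c) := by field_simp
  obtain ⟨w, hw⟩ : ∃ w, w = y / c := ⟨_, rfl⟩
  rw [← hw] at ey
  subst ey
  have erhs : 1 / (c ^ q * δ) * (c * w) ^ q + -(1 / (c * δ)) * (c * w) = (w ^ q - w) / δ := by
    rw [mul_pow]; field_simp; ring
  rw [erhs, eq_div_iff hδ0]
  by_cases hx : x = 0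
  · subst hx
    rw [hT0, zero_pow (by omega), zero_mul, eq_comm (a := (0 : K)), sub_eq_zero]
  · rw [hTx x w hx, hAiff, div_pow]
    have e : (x ^ (q + 1)) ^ q = x ^ (q + 1) := by
      rw [pow_succ, mul_pow, hqq, mul_comm]
    have hne : x ^ (q + 1) ≠ 0 := pow_ne_zero _ hx
    rw [e, ← sub_div, div_eq_iff hne, mul_comm δ, eq_comm]

lemma aux_vec_ne {K : Type*} [Field K] (x y : K) : (![x, y, 1] : Fin 3 → K) ≠ 0 := by
  intro hc; simpa using congr_fun hc 2

/-- The affine point `(x : y : 1)`. -/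
def auxPt {K : Type*} [Field K] (x y : K) : PGPt K := Projectivization.mk K ![x, y, 1] (aux_vec_ne x y)

lemma aux_auxPt_inj {K : Type*} [Field K] (x y x' y' : K) (h : auxPt x y = auxPt x' y') :
    x = x' ∧ y = y' := by
  unfold auxPt at h
  rw [Projectivization.mk_eq_mk_iff'] at h
  obtain ⟨a, ha⟩ := h
  have h0 := congr_fun ha 0
  have h1 := congr_fun ha 1
  have h2 := congr_fun ha 2
  simp at h0 h1 h2
  subst h2
  simp at h0 h1
  exact ⟨h0.symm, h1.symm⟩

lemma aux_le_ker {K : Type*} [Field K] (f : (Fin 3 → K) →ₗ[K] K) (v : Fin 3 → K) (hv : v ≠ 0) :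
    (Projectivization.mk K v hv).submodule ≤ LinearMap.ker f ↔ f v = 0 := by
  rw [Projectivization.submodule_mk, Submodule.span_singleton_le_iff_mem, LinearMap.mem_ker]

lemma aux_finrank_ker {K : Type*} [Field K] (f : (Fin 3 → K) →ₗ[K] K) (hf : f ≠ 0) :
    Module.finrank K (LinearMap.ker f) = 2 := by
  have h := LinearMap.finrank_range_add_finrank_ker f
  rw [LinearMap.range_eq_top.2 (LinearMap.surjective hf)] at h
  simp at h
  omega

lemma aux_mk_eq_auxPt {K : Type*} [Field K] (v : Fin 3 → K) (hv : v ≠ 0) (h2 : v 2 ≠ 0) :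
    Projectivization.mk K v hv = auxPt (v 0 / v 2) (v 1 / v 2) := by
  unfold auxPt
  rw [Projectivization.mk_eq_mk_iff']
  refine ⟨v 2, ?_⟩
  ext i
  fin_cases i <;> simp <;> field_simp

/-- A unital in `PG(2,q²)` through `O = (0:0:1)` and `Y∞ = (0:1:0)`, with tangent lines
`X₂ = 0` at `O` and `X₃ = 0` at `Y∞`, preserved by the projectivity `diag(λ, λ^{q+1}, 1)`
(`λ` a generator of `K*`), is a Hermitian curve `x₁^{q+1} = b·x₂^q·x₃ + b^q·x₂·x₃^q`;
in particular it is a classical unital. -/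
theorem unital_fixed_by_diagonal_group_is_hermitian
    (q : ℕ) (hq : IsPrimePow q) (hq2 : 2 < q)
    {K : Type*} [Field K] [Fintype K] (hK : Fintype.card K = q ^ 2)
    (u : Kˣ) (hu : ∀ x : Kˣ, x ∈ Subgroup.zpowers u)
    (U : Set (PGPt K)) (hU : IsUnital q U)
    (O Yinf : PGPt K)
    (hOdef : O = Projectivization.mk K ![0, 0, 1] (by
      intro hc; simpa using congr_fun hc 2))
    (hYdef : Yinf = Projectivization.mk K ![0, 1, 0] (by
      intro hc; simpa using congr_fun hc 1))
    (hO : O ∈ U) (hY : Yinf ∈ U)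
    (htangO : {R ∈ U | R.submodule ≤ LinearMap.ker
      (LinearMap.proj 1 : (Fin 3 → K) →ₗ[K] K)} = {O})
    (htangY : {R ∈ U | R.submodule ≤ LinearMap.ker
      (LinearMap.proj 2 : (Fin 3 → K) →ₗ[K] K)} = {Yinf})
    (hpres : (projHom (diagEquiv q u)) '' U = U) :
    ∃ b : K, b ≠ 0 ∧
      U = {R : PGPt K | R.rep 0 ^ (q + 1)
        = b * R.rep 1 ^ q * R.rep 2 + b ^ q * R.rep 1 * R.rep 2 ^ q} := by
  classical
  obtain ⟨p, h, hp, hh, hqp'⟩ := hq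
  have hqp := hqp'.symm
  rw [← Nat.prime_iff] at hp
  have : Fact p.Prime := ⟨hp⟩
  have : CharP K p := by
    have h1 := FiniteField.cast_card_eq_zero K
    rw [hK, hqp] at h1
    push_cast at h1
    have h2 : (p : K) = 0 := by
      by_contra hne
      exact pow_ne_zero _ (pow_ne_zero _ hne) h1
    exact (CharP.charP_iff_prime_eq_zero hp).2 h2
  have hq0 : (q : K) = 0 := by
    rw [hqp]; push_cast; rw [CharP.cast_eq_zero K p, zero_pow hh.ne']
  have hch : ∀ m, 0 < m → m < q → ((q.choose m : ℕ) : K) = 0 := by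
    intro m hm hmq
    rw [CharP.cast_eq_zero_iff K p, hqp]
    exact hp.dvd_choose_pow hm.ne' (by rw [← hqp]; exact hmq.ne)
  -- points of `U`
  have hinf : ∀ v : Fin 3 → K, ∀ hv : v ≠ 0, v 2 = 0 → Projectivization.mk K v hv ∈ U →
      Projectivization.mk K v hv = Yinf := by
    intro v hv h2 hU'
    have : Projectivization.mk K v hv ∈ ({Yinf} : Set (PGPt K)) := by
      rw [← htangY]
      refine ⟨hU', ?_⟩
      rw [aux_le_ker]
      exact h2
    exact this
  have hcases : ∀ P ∈ U, P = Yinf ∨ ∃ x y, P = auxPt x y := by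
    intro P hP
    induction' P using Projectivization.ind with v hv
    by_cases h2 : v 2 = 0
    · exact Or.inl (hinf v hv h2 hP)
    · exact Or.inr ⟨_, _, aux_mk_eq_auxPt v hv h2⟩
  have hYne : ∀ x y, Yinf ≠ auxPt x y := by
    intro x y hc
    rw [hYdef] at hc
    unfold auxPt at hc
    rw [Projectivization.mk_eq_mk_iff'] at hc
    obtain ⟨a, ha⟩ := hc
    have h1 := congr_fun ha 1
    have h2 := congr_fun ha 2
    simp at h1 h2
    subst h2
    simp at h1
  have hstep : ∀ x y : K, auxPt x y ∈ U → auxPt ((u : K) * x) ((u : K) ^ (q + 1) * y) ∈ U := by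
    intro x y hxy
    rw [← hpres]
    refine ⟨_, hxy, ?_⟩
    change Projectivization.map (diagEquiv q u).toLinearMap (diagEquiv q u).injective
      (Projectivization.mk K ![x, y, 1] (aux_vec_ne x y)) = _
    rw [Projectivization.map_mk]
    unfold auxPt
    rw [Projectivization.mk_eq_mk_iff']
    refine ⟨1, ?_⟩
    ext i
    rw [one_smul]
    change _ = diagEquiv q u _ i
    rw [diagEquiv_apply]
    fin_cases i <;> simp
  have hpow : ∀ l : ℕ, ∀ x y : K, auxPt x y ∈ U →
      auxPt ((u : K) ^ l * x) (((u : K) ^ l) ^ (q + 1) * y) ∈ U := by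
    intro l
    induction l with
    | zero => intro x y hxy; simpa using hxy
    | succ l ih =>
      intro x y hxy
      have := hstep _ _ (ih x y hxy)
      convert this using 2 <;> ring
  have hT : ∀ μ : K, μ ≠ 0 → ∀ x y, auxPt x y ∈ U → auxPt (μ * x) (μ ^ (q + 1) * y) ∈ U := by
    intro μ hμ x y hxy
    obtain ⟨l, hl⟩ := (mem_powers_iff_mem_zpowers (x := u)).2 (hu (Units.mk0 μ hμ))
    have hl' : (u : K) ^ l = μ := by
      have := congrArg Units.val hl
      simpa using this
    rw [← hl']
    exact hpow l x y hxy
  have hOpt : O = auxPt 0 0 := hOdef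
  have h00 : auxPt (0 : K) 0 ∈ U := hOpt ▸ hO
  have hx0 : ∀ x : K, auxPt x 0 ∈ U → x = 0 := by
    intro x hx
    have : auxPt x 0 ∈ ({O} : Set (PGPt K)) := by
      rw [← htangO]
      refine ⟨hx, ?_⟩
      unfold auxPt
      rw [aux_le_ker]
      simp
    have h2 : auxPt x 0 = auxPt 0 0 := by rw [← hOpt]; exact this
    exact (aux_auxPt_inj _ _ _ _ h2).1
  have hline : ∀ m k : K, {x | auxPt x (m * x + k) ∈ U}.ncard = 1 ∨
      {x | auxPt x (m * x + k) ∈ U}.ncard = q + 1 := by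
    intro m k
    obtain ⟨f, hf⟩ : ∃ f : (Fin 3 → K) →ₗ[K] K, ∀ v, f v = v 1 - m * v 0 - k * v 2 :=
      ⟨LinearMap.proj 1 - m • LinearMap.proj 0 - k • LinearMap.proj 2, fun v => by simp⟩
    have hfne : f ≠ 0 := by
      intro hc
      have := hf ![0, 1, 0]
      rw [hc] at this
      simp at this
    have h := hU.2 ⟨LinearMap.ker f, aux_finrank_ker f hfne⟩
    have e : {P ∈ U | PGMem P ⟨LinearMap.ker f, aux_finrank_ker f hfne⟩} =
        (fun x => auxPt x (m * x + k)) '' {x | auxPt x (m * x + k) ∈ U} := by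
      ext P
      constructor
      · rintro ⟨hP, hPL⟩
        rcases hcases P hP with rfl | ⟨x, y, rfl⟩
        · exfalso
          rw [hYdef] at hPL
          change Projectivization.submodule _ ≤ LinearMap.ker f at hPL
          rw [aux_le_ker, hf] at hPL
          simp at hPL
        · change Projectivization.submodule _ ≤ LinearMap.ker f at hPL
          unfold auxPt at hPL
          rw [aux_le_ker, hf] at hPL
          simp at hPL
          have hy : y = m * x + k := by linear_combination hPL
          subst hy
          exact ⟨x, hP, rfl⟩
      · rintro ⟨x, hx, rfl⟩
        refine ⟨hx, ?_⟩
        change Projectivization.submodule _ ≤ LinearMap.ker f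
        unfold auxPt
        rw [aux_le_ker, hf]
        simp
    rw [e, Set.ncard_image_of_injective] at h
    · exact h
    · intro x x' hxx
      exact (aux_auxPt_inj _ _ _ _ hxx).1
  have hvert : ∀ x : K, {y | auxPt x y ∈ U}.ncard = 0 ∨ {y | auxPt x y ∈ U}.ncard = q := by
    intro x
    obtain ⟨f, hf⟩ : ∃ f : (Fin 3 → K) →ₗ[K] K, ∀ v, f v = v 0 - x * v 2 :=
      ⟨LinearMap.proj 0 - x • LinearMap.proj 2, fun v => by simp⟩
    have hfne : f ≠ 0 := by
      intro hc
      have := hf ![1, 0, 0]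
      rw [hc] at this
      simp at this
    have h := hU.2 ⟨LinearMap.ker f, aux_finrank_ker f hfne⟩
    have e : {P ∈ U | PGMem P ⟨LinearMap.ker f, aux_finrank_ker f hfne⟩} =
        insert Yinf ((fun y => auxPt x y) '' {y | auxPt x y ∈ U}) := by
      ext P
      constructor
      · rintro ⟨hP, hPL⟩
        rcases hcases P hP with rfl | ⟨x', y, rfl⟩
        · exact Set.mem_insert _ _
        · right
          change Projectivization.submodule _ ≤ LinearMap.ker f at hPL
          unfold auxPt at hPL
          rw [aux_le_ker, hf] at hPL
          simp at hPL
          have hy : x' = x := by linear_combination hPL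
          subst hy
          exact ⟨y, hP, rfl⟩
      · rintro (rfl | ⟨y, hy, rfl⟩)
        · refine ⟨hY, ?_⟩
          rw [hYdef]
          change Projectivization.submodule _ ≤ LinearMap.ker f
          rw [aux_le_ker, hf]
          simp
        · refine ⟨hy, ?_⟩
          change Projectivization.submodule _ ≤ LinearMap.ker f
          unfold auxPt
          rw [aux_le_ker, hf]
          simp
    rw [e, Set.ncard_insert_of_notMem, Set.ncard_image_of_injective] at h
    · omega
    · intro y y' hyy
      exact (aux_auxPt_inj _ _ _ _ hyy).2
    · rintro ⟨y, _, hy⟩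
      exact hYne x y hy.symm
  obtain ⟨b, hb0, hb⟩ := aux_affine q (by omega) hK u hu hq0 (aux_frob_sub p h q hqp)
    (aux_frob_add p h q hqp) hch (fun x y => auxPt x y ∈ U) hT h00 hx0 hline hvert
  refine ⟨b, hb0, ?_⟩
  ext P
  obtain ⟨v, hvdef⟩ : ∃ v, v = P.rep := ⟨_, rfl⟩
  have hv : v ≠ 0 := by rw [hvdef]; exact P.rep_nonzero
  have hPv : P = Projectivization.mk K v hv := by
    subst hvdef
    exact P.mk_rep.symm
  rw [Set.mem_ofPred_eq, ← hvdef, hPv]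
  by_cases h2 : v 2 = 0
  · rw [h2, mul_zero, zero_pow (by omega), mul_zero, add_zero]
    constructor
    · intro hm
      have h3 := hinf v hv h2 hm
      rw [hYdef, Projectivization.mk_eq_mk_iff'] at h3
      obtain ⟨a, ha⟩ := h3
      have h0 := congr_fun ha 0
      simp at h0
      rw [← h0]
      exact zero_pow (by omega)
    · intro hz
      have h0 : v 0 = 0 := by
        by_contra hne
        exact pow_ne_zero _ hne hz
      have : Projectivization.mk K v hv = Yinf := by
        rw [hYdef, Projectivization.mk_eq_mk_iff']
        refine ⟨v 1, ?_⟩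
        ext i
        fin_cases i <;> simp [h0, h2]
      rw [this]; exact hY
  · rw [aux_mk_eq_auxPt v hv h2, hb]
    have hne : v 2 ^ q ≠ 0 := pow_ne_zero _ h2
    rw [div_pow, div_pow, pow_succ (v 2) q]
    constructor
    · intro hx
      field_simp at hx
      linear_combination hx
    · intro hx
      field_simp
      linear_combination hx
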